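/- Additive composition of quantitative dependencies along an n-step dependency chain: let w be an infinite trace, κ a cost function, a₀, a₁, …, a_n atomic propositions (n ≥ 1), and q₁, …, q_n ∈ ℕ. If for every m with 1 ≤ m ≤ n the dependency (a_{m-1} ∘≤q_m a_m) holds at every position of w, then (a₀ ∘≤(q₁+⋯+q_n) a_n) holds at every position of w, i.e., whenever a₀ ∈ w(i) there exists k ≥ i with a_n ∈ w(k) and C(i,k) ≤ q₁ + ⋯ + q_n. -/

import Mathlib

/-- Additive composition of quantitative dependencies along an `n`-step
dependency chain: if for every `m` with `1 ≤ m ≤ n` the dependency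
`a_{m-1} ∘≤q_m a_m` holds at every position, then
`a₀ ∘≤(q₁+⋯+q_n) a_n` holds at every position. -/
theorem quantDep_chain {AP : Type*} (w : ℕ → Set AP) (κ : ℕ → ℕ)
    (n : ℕ) (hn : 1 ≤ n) (a : ℕ → AP) (q : ℕ → ℕ)
    (h : ∀ m, 1 ≤ m → m ≤ n → ∀ i, a (m - 1) ∈ w i →
      ∃ j ≥ i, a m ∈ w j ∧ ∑ k ∈ Finset.Ico i j, κ k ≤ q m) :
    ∀ i, a 0 ∈ w i →
      ∃ k ≥ i, a n ∈ w k ∧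
        ∑ l ∈ Finset.Ico i k, κ l ≤ ∑ m ∈ Finset.Icc 1 n, q m := by
  intro i hi
  have key : ∀ p, p ≤ n → ∃ k ≥ i, a p ∈ w k ∧
      ∑ l ∈ Finset.Ico i k, κ l ≤ ∑ m ∈ Finset.Icc 1 p, q m := by
    intro p
    induction p with
    | zero => exact fun _ => ⟨i, le_refl i, hi, by simp⟩
    | succ p ih =>
      intro hp
      obtain ⟨k, hk, hak, hc⟩ := ih (by omega)
      obtain ⟨j, hj, haj, hd⟩ := h (p + 1) (by omega) hp k (by simpa using hak)
      refine ⟨j, le_trans hk hj, haj, ?_⟩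
      rw [← Finset.sum_Ico_consecutive κ hk hj, Finset.sum_Icc_succ_top (by omega)]
      exact add_le_add hc hd
  exact key n le_rfl
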